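/- Let I, J, K, R be integers with 3 ≤ I ≤ J ≤ R ≤ K and R ≤ (I−1)(J−1). Then, for F = ℝ and for F = ℂ, the CPD of an I×J×K tensor of rank R is generically unique. -/

import Mathlib

/-!
Since `R ≤ K`, a generic `C` has independent columns `c_r`, so the span of the frontal slices of
`T = [A,B,C]_R` is the span `W` of the matrices `a_r b_rᵀ`. Suppose that the only matrices of rank
at most one in `W` are the multiples of single `a_r b_rᵀ`; in particular these `R` matrices are
independent. Any decomposition of `T` into `n` terms `a'_s ∘ b'_s ∘ c'_s` has `W` inside the span
of the `a'_s b'_sᵀ`, so `n ≥ R`; for `n = R` the spans agree, every `a'_s b'_sᵀ` lies in `W`, and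
is therefore a multiple of some `a_r b_rᵀ`. Independence then matches up the third factors
(`unique_of_good`, `cpdUnique_of_good`).

It remains to see that the supposition holds for almost all `(A, B)`. Let
`∑ t_r a_r b_rᵀ = x yᵀ` with at least two nonzero weights, and let `D` be a set of `I` indices
that contains, or is contained in, the support of `t`. Generically the `a_d`, `d ∈ D`, form a basis
of `F^I`, and in coordinates with respect to it
`t_d b_d + ∑_{q ∉ D} t_q g_{qd} b_q = u_d y` for `d ∈ D`.
If the support lies in `D`, two columns of `B` are parallel to `y`, which is generically
impossible. If `D` lies in the support, the equation can be solved for `b_d`, so `(A, B)` is a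
polynomial function of `a_d`, `g`, the `b_q` with `q ∉ D`, the weights and `u`, `y`
(`rankOne_of_generic`). After normalising one weight and one `u_d` to `1`, the number of parameters
is `RI + (R - I)J + (R - 1) + (I - 1) + J`, which is less than `RI + RJ` exactly when
`R ≤ (I - 1)(J - 1)`; so the exceptional set is the range of a differentiable map from a space of
smaller dimension, which is a null set (`null_range`, `badMap_null`).
-/

open MeasureTheory

noncomputable section

/-- The tensor `[A,B,C]_R` with entries `t_{ijk} = Σ_r A i r * B j r * C k r`. -/
def cpdSum {F : Type*} [CommRing F] {I J K R : ℕ}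
    (A : Fin I → Fin R → F) (B : Fin J → Fin R → F) (C : Fin K → Fin R → F) :
    Fin I → Fin J → Fin K → F :=
  fun i j k => ∑ r : Fin R, A i r * B j r * C k r

/-- `T` is the sum of the `R` rank-1 terms `a_r ∘ b_r ∘ c_r` with all vectors nonzero. -/
def IsPD {F : Type*} [CommRing F] {I J K : ℕ} (T : Fin I → Fin J → Fin K → F) (R : ℕ)
    (a : Fin R → Fin I → F) (b : Fin R → Fin J → F) (c : Fin R → Fin K → F) : Prop :=
  (∀ r, a r ≠ 0) ∧ (∀ r, b r ≠ 0) ∧ (∀ r, c r ≠ 0) ∧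
    ∀ i j k, T i j k = ∑ r : Fin R, a r i * b r j * c r k

/-- The rank of a third-order tensor: the minimal number of rank-1 terms. -/
def tensorRank {F : Type*} [CommRing F] {I J K : ℕ} (T : Fin I → Fin J → Fin K → F) : ℕ :=
  sInf {R | ∃ a b c, IsPD T R a b c}

/-- The CPD of `T` is unique: any two decompositions of `T` into `tensorRank T` nonzero
rank-1 terms coincide up to permutation of the rank-1 terms. -/
def CPDUnique {F : Type*} [CommRing F] {I J K : ℕ} (T : Fin I → Fin J → Fin K → F) : Prop :=
  ∀ (a a' : Fin (tensorRank T) → Fin I → F) (b b' : Fin (tensorRank T) → Fin J → F)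
    (c c' : Fin (tensorRank T) → Fin K → F),
    IsPD T (tensorRank T) a b c → IsPD T (tensorRank T) a' b' c' →
    ∃ σ : Equiv.Perm (Fin (tensorRank T)),
      ∀ r i j k, a r i * b r j * c r k = a' (σ r) i * b' (σ r) j * c' (σ r) k

/-- The CPD of an `I×J×K` tensor of rank `R` is generically unique over `F`:
the set of triples `(A,B,C)` for which the CPD of `[A,B,C]_R` is not unique has
Lebesgue measure zero. -/
def CPDGenericallyUnique (F : Type*) [CommRing F] [MeasureSpace F] (I J K R : ℕ) : Prop :=
  volume {p : (Fin I → Fin R → F) × (Fin J → Fin R → F) × (Fin K → Fin R → F) |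
    ¬ CPDUnique (cpdSum p.1 p.2.1 p.2.2)} = 0

/-! ### Ranges of maps from a space of smaller dimension -/

/-- Precomposing `f` with a linear surjection `E → P` gives a self-map of `E` with the same range
whose derivative is singular everywhere, so the range is null by the easy case of Sard's
theorem. -/
theorem null_range {F P E : Type*} [RCLike F]
    [NormedAddCommGroup P] [NormedSpace F P] [FiniteDimensional F P]
    [NormedAddCommGroup E] [NormedSpace F E] [NormedSpace ℝ E] [IsScalarTower ℝ F E]
    [FiniteDimensional F E] [MeasurableSpace E] [BorelSpace E]
    (μ : Measure E) [μ.IsAddHaarMeasure] (f : P → E) (hf : Differentiable F f)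
    (hd : Module.finrank F P < Module.finrank F E) : μ (Set.range f) = 0 := by
  have : FiniteDimensional ℝ E := FiniteDimensional.trans ℝ F E
  obtain ⟨L, hL⟩ : ∃ L : E →ₗ[F] P, Function.Surjective L := by
    let eP := (Module.finBasis F P).equivFun
    let eE := (Module.finBasis F E).equivFun
    refine ⟨eP.symm.toLinearMap ∘ₗ LinearMap.funLeft F F (Fin.castLE hd.le) ∘ₗ eE.toLinearMap, ?_⟩
    exact eP.symm.surjective.comp ((LinearMap.funLeft_surjective_of_injective F F _
      (Fin.castLE_injective hd.le)).comp eE.surjective)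
  have hr : Set.range f = (f ∘ L) '' Set.univ := by
    rw [Set.image_univ, hL.range_comp]
  let L' : E →L[F] P := LinearMap.toContinuousLinearMap L
  rw [hr]
  refine addHaar_image_eq_zero_of_det_fderivWithin_eq_zero μ
    (f' := fun x => ((fderiv F f (L x)).comp L').restrictScalars ℝ) ?_ ?_
  · intro x _
    have h1 : HasFDerivAt (f ∘ L') ((fderiv F f (L' x)).comp L') x :=
      (hf (L' x)).hasFDerivAt.comp x L'.hasFDerivAt
    exact (h1.restrictScalars ℝ).hasFDerivWithinAt
  · intro x _
    -- The derivative factors through `L`, which has a nontrivial kernel.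
    have hk : ¬ Function.Injective L := fun h =>
      absurd (LinearMap.finrank_le_finrank_of_injective h) (by omega)
    refine LinearMap.det_eq_zero_iff_ker_ne_bot.2 fun h => hk fun u v huv => ?_
    apply LinearMap.ker_eq_bot.1 h
    change fderiv F f (L x) (L u) = fderiv F f (L x) (L v)
    rw [huv]

/-! ### Uniqueness from the rank-one matrices in the span -/

/-- If the only matrices of rank at most one in the span of the `a_r b_rᵀ` are the multiples of
single ones (`hG`) and the columns of `C` are independent (`hC`), then a decomposition of
`[A,B,C]_R` has at least `R` terms, and one with exactly `R` terms agrees with the given one up to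
order. -/
theorem unique_of_good {F : Type*} [Field F] {I J K R n : ℕ}
    {A : Fin I → Fin R → F} {B : Fin J → Fin R → F} {C : Fin K → Fin R → F}
    (hA : ∀ r, ∃ i, A i r ≠ 0) (hB : ∀ r, ∃ j, B j r ≠ 0)
    (hC : ∀ c : Fin R → F, (∀ k, ∑ r, c r * C k r = 0) → ∀ r, c r = 0)
    (hG : ∀ (t : Fin R → F) (x : Fin I → F) (y : Fin J → F),
      (∀ i j, ∑ r, t r * (A i r * B j r) = x i * y j) → ∃ r₀, ∀ r, r ≠ r₀ → t r = 0)
    {a : Fin n → Fin I → F} {b : Fin n → Fin J → F} {c : Fin n → Fin K → F}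
    (h : IsPD (cpdSum A B C) n a b c) :
    R ≤ n ∧ (n = R → ∃ σ : Fin n ≃ Fin R, ∀ r i j k,
      a r i * b r j * c r k = A i (σ r) * B j (σ r) * C k (σ r)) := by
  obtain ⟨ha, hb, -, hT⟩ := h
  let m : Fin R → Fin I → Fin J → F := fun r i j => A i r * B j r
  let m' : Fin n → Fin I → Fin J → F := fun r i j => a r i * b r j
  have hm : LinearIndependent F m := by
    rw [Fintype.linearIndependent_iff]
    intro g hg
    have hg' : ∀ i j, ∑ r, g r * (A i r * B j r) = 0 := fun i j => by
      simpa [m, Finset.sum_apply] using congrFun (congrFun hg i) j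
    obtain ⟨r₀, h0⟩ := hG g 0 0 (fun i j => by simpa using hg' i j)
    intro r
    by_cases hr : r = r₀
    · subst hr
      obtain ⟨i, hi⟩ := hA r
      obtain ⟨j, hj⟩ := hB r
      have := hg' i j
      rw [Finset.sum_eq_single r (fun q _ hq => by rw [h0 q hq, zero_mul]) (by simp)] at this
      simpa [hi, hj] using this
    · exact h0 r hr
  -- `g` recovers the coefficients of a combination of the columns of `C`.
  obtain ⟨g, hg⟩ := (Matrix.mulVecLin (Matrix.of C)).exists_leftInverse_of_injective (by
    rw [LinearMap.ker_eq_bot']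
    intro v hv
    funext r
    refine hC v (fun k => ?_) r
    have := congrFun hv k
    simpa [Matrix.mulVec, dotProduct, mul_comm] using this)
  have hspan : ∀ s, m s = ∑ r, g (c r) s • m' r := by
    intro s
    funext i j
    have e1 : (Matrix.mulVecLin (Matrix.of C)) (fun r => m r i j)
        = ∑ r, (a r i * b r j) • c r := by
      funext k
      have := hT i j k
      simp only [cpdSum] at this
      simpa [Matrix.mulVec, dotProduct, Finset.sum_apply, m, mul_comm, mul_assoc,
        mul_left_comm] using this
    have e2 := congrArg g e1
    rw [← LinearMap.comp_apply, hg, map_sum] at e2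
    have e3 := congrFun e2 s
    simpa [Finset.sum_apply, m', mul_comm] using e3
  have hle : Submodule.span F (Set.range m) ≤ Submodule.span F (Set.range m') := by
    rw [Submodule.span_le]
    rintro _ ⟨s, rfl⟩
    rw [hspan s]
    exact Submodule.sum_mem _ fun r _ =>
      Submodule.smul_mem _ _ (Submodule.subset_span ⟨r, rfl⟩)
  have hfm : Module.finrank F (Submodule.span F (Set.range m)) = R := by
    simpa using finrank_span_eq_card hm
  have hfm' : Module.finrank F (Submodule.span F (Set.range m')) ≤ n := by
    simpa [Set.finrank] using finrank_range_le_card (R := F) m'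
  have hmono := Submodule.finrank_mono hle
  refine ⟨by omega, ?_⟩
  intro hn
  subst hn
  have heq : Submodule.span F (Set.range m) = Submodule.span F (Set.range m') :=
    Submodule.eq_of_le_of_finrank_le hle (by omega)
  have hLI' : LinearIndependent F m' := by
    rw [linearIndependent_iff_card_le_finrank_span]
    simp only [Fintype.card_fin, Set.finrank]
    omega
  have hex : ∀ p, ∃ (s : Fin n) (τ : F), m' p = τ • m s := by
    intro p
    have hp : m' p ∈ Submodule.span F (Set.range m) := by
      rw [heq]; exact Submodule.subset_span ⟨p, rfl⟩
    obtain ⟨t, ht⟩ := (Submodule.mem_span_range_iff_exists_fun F).1 hp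
    obtain ⟨s, hs⟩ := hG t (a p) (b p) (fun i j => by
      simpa [m, m', Finset.sum_apply] using congrFun (congrFun ht i) j)
    refine ⟨s, t s, ?_⟩
    rw [← ht, Finset.sum_eq_single s (fun q _ hq => by rw [hs q hq, zero_smul]) (by simp)]
  choose σ τ hστ using hex
  have hinj : Function.Injective σ := by
    intro p q hpq
    by_contra hne
    have := linearIndependent_iff'.1 hLI' {p, q} (fun r => if r = p then τ q else -τ p) (by
      rw [Finset.sum_pair hne, if_pos rfl, if_neg (Ne.symm hne), hστ p, hστ q, hpq, smul_smul,
        smul_smul, ← add_smul, mul_comm, neg_mul, add_neg_cancel, zero_smul]) p (by simp)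
    rw [if_pos rfl] at this
    exact hLI'.ne_zero q (by rw [hστ q, this, zero_smul])
  let e : Fin n ≃ Fin n := Equiv.ofBijective σ (Finite.injective_iff_bijective.1 hinj)
  refine ⟨e, ?_⟩
  have hc : ∀ r k, C k (e r) = τ r * c r k := by
    intro r k
    have h0 : ∑ s, (C k s - τ (e.symm s) * c (e.symm s) k) • m s = 0 := by
      simp only [sub_smul, Finset.sum_sub_distrib]
      rw [sub_eq_zero, ← Equiv.sum_comp e (fun s => (τ (e.symm s) * c (e.symm s) k) • m s)]
      funext i j
      have := hT i j k
      simp only [cpdSum] at this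
      have hm2 : ∀ r, a r i * b r j = τ r * m (e r) i j := fun r =>
        congrFun (congrFun (hστ r) i) j
      simp only [hm2] at this
      simp only [Finset.sum_apply, Pi.smul_apply, smul_eq_mul, Equiv.symm_apply_apply]
      calc _ = ∑ r, A i r * B j r * C k r := Finset.sum_congr rfl fun r _ => by
              simp only [m]; ring
        _ = _ := this
        _ = _ := Finset.sum_congr rfl fun r _ => by ring
    have := Fintype.linearIndependent_iff.1 hm _ h0 (e r)
    rw [Equiv.symm_apply_apply] at this
    exact sub_eq_zero.1 this
  intro r i j k
  have hm2 : a r i * b r j = τ r * (A i (e r) * B j (e r)) :=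
    congrFun (congrFun (hστ r) i) j
  rw [hm2, hc]; ring

theorem cpdUnique_of_good {F : Type*} [Field F] {I J K R : ℕ}
    {A : Fin I → Fin R → F} {B : Fin J → Fin R → F} {C : Fin K → Fin R → F}
    (hA : ∀ r, ∃ i, A i r ≠ 0) (hB : ∀ r, ∃ j, B j r ≠ 0)
    (hC : ∀ c : Fin R → F, (∀ k, ∑ r, c r * C k r = 0) → ∀ r, c r = 0)
    (hG : ∀ (t : Fin R → F) (x : Fin I → F) (y : Fin J → F),
      (∀ i j, ∑ r, t r * (A i r * B j r) = x i * y j) → ∃ r₀, ∀ r, r ≠ r₀ → t r = 0) :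
    CPDUnique (cpdSum A B C) := by
  have hself : IsPD (cpdSum A B C) R (fun r i => A i r) (fun r j => B j r) (fun r k => C k r) := by
    refine ⟨fun r h => ?_, fun r h => ?_, fun r h => ?_, fun i j k => rfl⟩
    · obtain ⟨i, hi⟩ := hA r
      exact hi (congrFun h i)
    · obtain ⟨i, hi⟩ := hB r
      exact hi (congrFun h i)
    · have := hC (Pi.single r 1) (fun k => by
        simpa [Pi.single_apply] using congrFun h k) r
      simp at this
  have hrank : tensorRank (cpdSum A B C) = R := by
    apply le_antisymm
    · exact Nat.sInf_le ⟨_, _, _, hself⟩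
    · refine le_csInf ⟨R, _, _, _, hself⟩ ?_
      rintro n ⟨a, b, c, h⟩
      exact (unique_of_good hA hB hC hG h).1
  intro a a' b b' c c' h h'
  obtain ⟨σ, hσ⟩ := (unique_of_good hA hB hC hG h).2 hrank
  obtain ⟨σ', hσ'⟩ := (unique_of_good hA hB hC hG h').2 hrank
  refine ⟨σ.trans σ'.symm, fun r i j k => ?_⟩
  rw [hσ, hσ']
  simp

/-! ### Exceptional sets of matrices -/

theorem isAddHaar_matrix (F : Type*) [RCLike F] [MeasureSpace F] [BorelSpace F]
    [(volume : Measure F).IsAddHaarMeasure] (m n : ℕ) :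
    (volume : Measure (Fin m → Fin n → F)).IsAddHaarMeasure := by
  have h1 : (volume : Measure (Fin n → F)).IsAddHaarMeasure := inferInstance
  have : BorelSpace (Fin n → F) := inferInstance
  have : SigmaFinite (volume : Measure (Fin n → F)) := inferInstance
  exact Measure.pi.isAddHaarMeasure (fun _ : Fin m => (volume : Measure (Fin n → F)))

/-- Almost every matrix has its columns indexed by `D` linearly independent, when there are at
most as many of them as there are rows. A dependence expresses one column through the others, so
the exceptional matrices depend on too few parameters. -/
theorem ae_columns_independent (F : Type*) [RCLike F] [MeasureSpace F] [BorelSpace F]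
    [(volume : Measure F).IsAddHaarMeasure] {m n : ℕ} (D : Finset (Fin n)) (hD : D.card ≤ m) :
    ∀ᵐ A : Fin m → Fin n → F, ∀ c : Fin n → F,
      (∀ i, ∑ d ∈ D, c d * A i d = 0) → ∀ d ∈ D, c d = 0 := by
  have := isAddHaar_matrix F m n
  let Φ : (q : Fin n) → (Fin m → {r : Fin n // r ≠ q} → F) × ({r // r ∈ D.erase q} → F) →
      (Fin m → Fin n → F) := fun q p i r =>
    if h : r ≠ q then p.1 i ⟨r, h⟩
    else ∑ d : {r // r ∈ D.erase q}, p.2 d * p.1 i ⟨d, Finset.ne_of_mem_erase d.2⟩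
  have hnull : ∀ q ∈ D, ∀ᵐ A : Fin m → Fin n → F, A ∉ Set.range (Φ q) := by
    intro q hq
    rw [← measure_eq_zero_iff_ae_notMem]
    refine null_range (F := F) volume (Φ q) ?_ ?_
    · rw [differentiable_pi]; intro i
      rw [differentiable_pi]; intro r
      by_cases h : r = q
      · simp only [Φ, h, ne_eq, not_true_eq_false, dite_false]
        fun_prop
      · simp only [Φ, h, ne_eq, not_false_eq_true, dite_true]
        fun_prop
    · have h1 : 1 ≤ D.card := Finset.card_pos.2 ⟨q, hq⟩
      obtain ⟨k, rfl⟩ : ∃ k, n = k + 1 := ⟨n - 1, by have := q.pos; omega⟩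
      simp only [ne_eq, Module.finrank_prod, Module.finrank_pi_fintype, Module.finrank_self,
        Finset.sum_const, Finset.card_univ, smul_eq_mul, mul_one, Fintype.card_fin,
        Fintype.card_coe, Fintype.card_subtype_compl, Fintype.card_unique,
        Finset.card_erase_of_mem hq, Nat.add_sub_cancel]
      rw [Nat.mul_succ]
      omega
  have hall : ∀ᵐ A : Fin m → Fin n → F, ∀ q ∈ D, A ∉ Set.range (Φ q) := by
    rw [ae_all_iff]; intro q
    rw [ae_all_iff]; exact hnull q
  filter_upwards [hall] with A hA c hc q hq
  by_contra hcq
  refine hA q hq ⟨(fun i r => A i r, fun d => -(c d / c q)), ?_⟩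
  funext i r
  by_cases h : r = q
  · subst h
    simp only [Φ, ne_eq, not_true_eq_false, dite_false]
    have h0 := hc i
    rw [← Finset.add_sum_erase D _ hq] at h0
    rw [Finset.sum_coe_sort (D.erase r) (fun d => -(c d / c r) * A i d)]
    have : ∑ d ∈ D.erase r, -(c d / c r) * A i d = -(c r)⁻¹ * ∑ d ∈ D.erase r, c d * A i d := by
      rw [Finset.mul_sum]
      exact Finset.sum_congr rfl fun d _ => by ring
    rw [this, eq_neg_of_add_eq_zero_right h0]
    field_simp
  · simp [Φ, h]

/-- The parameters of the exceptional family. The columns `D` of `A` and the columns outside `D` of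
`B` are free; then come the coordinates of the remaining columns of `A` in the basis `D`, the
weights of the combination, one of them normalised to `1`, the coordinates in the basis `D` of the
column vector of the rank-one matrix, one of them normalised to `1`, and its row vector. The matrix
`C` plays no role. -/
abbrev BadParam (F : Type*) (I J K R : ℕ) (D : Finset (Fin R)) (r₀ p : Fin R) : Type _ :=
  ({r // r ∈ D} → Fin I → F) × ({r // r ∈ Dᶜ} → {r // r ∈ D} → F) ×
    ({r // r ∈ Dᶜ} → Fin J → F) × ({r : Fin R // r ≠ r₀} → F) × ({r // r ∈ D.erase p} → F) ×
    (Fin J → F) × (Fin K → Fin R → F)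

/-- The matrices with the given parameters. The weight of column `r ∈ D` enters through its
inverse, which makes the map polynomial. -/
def badMap (F : Type*) [Field F] (I J K R : ℕ) (D : Finset (Fin R)) (r₀ p : Fin R)
    (z : BadParam F I J K R D r₀ p) :
    (Fin I → Fin R → F) × (Fin J → Fin R → F) × (Fin K → Fin R → F) :=
  (fun i r => if h : r ∈ D then z.1 ⟨r, h⟩ i
      else ∑ d : {r // r ∈ D}, z.2.1 ⟨r, Finset.mem_compl.2 h⟩ d * z.1 d i,
    fun j r => if h : r ∈ D then
        (if h0 : r ≠ r₀ then z.2.2.2.1 ⟨r, h0⟩ else 1) *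
          ((if hp : r ≠ p then z.2.2.2.2.1 ⟨r, Finset.mem_erase.2 ⟨hp, h⟩⟩ else 1) *
              z.2.2.2.2.2.1 j -
            ∑ q : {r // r ∈ Dᶜ}, (if h0 : q.1 ≠ r₀ then z.2.2.2.1 ⟨q.1, h0⟩ else 1) *
              z.2.1 q ⟨r, h⟩ * z.2.2.1 q j)
      else z.2.2.1 ⟨r, Finset.mem_compl.2 h⟩ j,
    z.2.2.2.2.2.2)

theorem badMap_null (F : Type*) [RCLike F] [MeasureSpace F] [BorelSpace F]
    [(volume : Measure F).IsAddHaarMeasure] {I J K R : ℕ} (hI : 1 ≤ I) (hJ : 1 ≤ J)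
    (hR : R ≤ (I - 1) * (J - 1)) (D : Finset (Fin R)) (hD : D.card = I)
    (r₀ p : Fin R) (hp : p ∈ D) :
    volume (Set.range (badMap F I J K R D r₀ p)) = 0 := by
  have := isAddHaar_matrix F I R
  have := isAddHaar_matrix F J R
  have := isAddHaar_matrix F K R
  have : (volume : Measure ((Fin J → Fin R → F) × (Fin K → Fin R → F))).IsAddHaarMeasure :=
    Measure.prod.instIsAddHaarMeasure (volume : Measure (Fin J → Fin R → F))
      (volume : Measure (Fin K → Fin R → F))
  have : BorelSpace ((Fin J → Fin R → F) × (Fin K → Fin R → F)) := inferInstance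
  have : MeasurableAdd ((Fin J → Fin R → F) × (Fin K → Fin R → F)) :=
    ContinuousAdd.measurableAdd
  have : (volume : Measure ((Fin I → Fin R → F) × (Fin J → Fin R → F) ×
      (Fin K → Fin R → F))).IsAddHaarMeasure :=
    Measure.prod.instIsAddHaarMeasure (volume : Measure (Fin I → Fin R → F))
      (volume : Measure ((Fin J → Fin R → F) × (Fin K → Fin R → F)))
  refine null_range (F := F) volume _ ?_ ?_
  · refine Differentiable.prodMk ?_ (Differentiable.prodMk ?_ ?_)
    · rw [differentiable_pi]; intro i
      rw [differentiable_pi]; intro r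
      split_ifs with h <;> fun_prop
    · rw [differentiable_pi]; intro i
      rw [differentiable_pi]; intro r
      have hw : ∀ q : Fin R, Differentiable F (fun z : BadParam F I J K R D r₀ p =>
          if h0 : q ≠ r₀ then z.2.2.2.1 ⟨q, h0⟩ else 1) := by
        intro q
        split_ifs <;> fun_prop
      have hx : ∀ h : r ∈ D, Differentiable F (fun z : BadParam F I J K R D r₀ p =>
          if hp : r ≠ p then z.2.2.2.2.1 ⟨r, Finset.mem_erase.2 ⟨hp, h⟩⟩ else 1) := by
        intro h
        split_ifs <;> fun_prop
      by_cases h : r ∈ D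
      · simp only [h, dite_true]
        refine (hw r).mul (((hx h).mul (by fun_prop)).sub ?_)
        refine Differentiable.fun_sum fun q _ => ?_
        exact ((hw q).mul (by fun_prop)).mul (by fun_prop)
      · simp only [h, dite_false]
        fun_prop
    · fun_prop
  · have hDR : I ≤ R := by
      rw [← hD]; simpa using Finset.card_le_univ D
    simp only [ne_eq, Module.finrank_prod, Module.finrank_pi_fintype, Module.finrank_self,
        Finset.sum_const, Finset.card_univ, smul_eq_mul, mul_one, Fintype.card_fin,
        Fintype.card_coe, Fintype.card_subtype_compl, Fintype.card_unique,
        Finset.card_erase_of_mem hp, Finset.card_compl, hD]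
    have hR1 : 1 ≤ R := hI.trans hDR
    obtain ⟨i, rfl⟩ : ∃ i, I = i + 1 := ⟨I - 1, by omega⟩
    obtain ⟨j, rfl⟩ : ∃ j, J = j + 1 := ⟨J - 1, by omega⟩
    obtain ⟨s, rfl⟩ : ∃ s, R = (i + 1) + s := ⟨R - (i + 1), by omega⟩
    have e1 : i + 1 + s - (i + 1) = s := by omega
    have e2 : i + 1 + s - 1 = i + s := by omega
    simp only [e1, e2, Nat.add_sub_cancel] at hR ⊢
    nlinarith

/-! ### Generic uniqueness -/

/-- For matrices outside the exceptional families, the only matrices of rank at most one in the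
span of the `a_r b_rᵀ` are the multiples of one of them. -/
theorem rankOne_of_generic {F : Type*} [Field F] {I J K R : ℕ} (hI : 1 ≤ I) (hJ : 2 ≤ J)
    (hIR : I ≤ R)
    {A : Fin I → Fin R → F} {B : Fin J → Fin R → F} {C : Fin K → Fin R → F}
    (hA : ∀ D : Finset (Fin R), D.card ≤ I → ∀ c : Fin R → F,
      (∀ i, ∑ d ∈ D, c d * A i d = 0) → ∀ d ∈ D, c d = 0)
    (hB : ∀ D : Finset (Fin R), D.card ≤ J → ∀ c : Fin R → F,
      (∀ j, ∑ d ∈ D, c d * B j d = 0) → ∀ d ∈ D, c d = 0)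
    (hbad : ∀ (D : Finset (Fin R)) (r₀ p : Fin R), D.card = I → p ∈ D →
      (A, B, C) ∉ Set.range (badMap F I J K R D r₀ p))
    (t : Fin R → F) (x : Fin I → F) (y : Fin J → F)
    (h : ∀ i j, ∑ r, t r * (A i r * B j r) = x i * y j) : ∃ r₀, ∀ r, r ≠ r₀ → t r = 0 := by
  classical
  by_contra! hcon
  obtain ⟨r₁, -, h₁⟩ := hcon ⟨0, by omega⟩
  obtain ⟨r₂, h₁₂, h₂⟩ := hcon r₁
  let S := Finset.univ.filter fun r => t r ≠ 0
  obtain ⟨D, hD, hDS⟩ : ∃ D : Finset (Fin R), D.card = I ∧ (D ⊆ S ∨ S ⊆ D) := by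
    rcases le_total I S.card with hs | hs
    · obtain ⟨D, hDS, hD⟩ := Finset.exists_subset_card_eq hs
      exact ⟨D, hD, Or.inl hDS⟩
    · obtain ⟨D, hDS, hD⟩ := Finset.exists_superset_card_eq hs (by simpa using hIR)
      exact ⟨D, hD, Or.inr hDS⟩
  -- The columns in `D` form a basis, being as many independent vectors as the dimension.
  have hbasis : ∀ v : Fin I → F, ∃ c : Fin R → F, ∀ i, v i = ∑ d ∈ D, c d * A i d := by
    let L : ({r // r ∈ D} → F) →ₗ[F] (Fin I → F) :=
      { toFun := fun c i => ∑ d : {r // r ∈ D}, c d * A i d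
        map_add' := fun c c' => by
          funext i; simp [add_mul, Finset.sum_add_distrib]
        map_smul' := fun a c => by
          funext i; simp [Finset.mul_sum, mul_assoc] }
    have hext : ∀ (c : {r // r ∈ D} → F) i,
        L c i = ∑ d ∈ D, (if h : d ∈ D then c ⟨d, h⟩ else 0) * A i d := by
      intro c i
      rw [← Finset.sum_coe_sort D (fun d => (if h : d ∈ D then c ⟨d, h⟩ else 0) * A i d)]
      exact Finset.sum_congr rfl fun d _ => by simp
    have hinj : Function.Injective L := by
      rw [← LinearMap.ker_eq_bot, LinearMap.ker_eq_bot']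
      intro c hc
      funext d
      have := hA D hD.le (fun d => if h : d ∈ D then c ⟨d, h⟩ else 0)
        (fun i => by rw [← hext, hc]; rfl) d d.2
      simpa using this
    have hsurj := (LinearMap.injective_iff_surjective_of_finrank_eq_finrank
      (f := L) (by simp [hD])).1 hinj
    intro v
    obtain ⟨c, hc⟩ := hsurj v
    exact ⟨fun d => if h : d ∈ D then c ⟨d, h⟩ else 0, fun i => by rw [← hc, hext]⟩
  choose g hg using fun q => hbasis (fun i => A i q)
  obtain ⟨u, hu⟩ := hbasis x
  -- Coordinates with respect to the basis `D`.
  have hco : ∀ j, ∀ d ∈ D,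
      t d * B j d + ∑ q ∈ Dᶜ, t q * g q d * B j q = u d * y j := by
    intro j d hd
    refine sub_eq_zero.1 (hA D hD.le
      (fun d => t d * B j d + ∑ q ∈ Dᶜ, t q * g q d * B j q - u d * y j) (fun i => ?_) d hd)
    have h1 := h i j
    rw [← Finset.sum_add_sum_compl D, hu i] at h1
    have h2 : ∑ q ∈ Dᶜ, t q * (A i q * B j q)
        = ∑ d ∈ D, (∑ q ∈ Dᶜ, t q * g q d * B j q) * A i d := by
      simp only [Finset.sum_mul]
      rw [Finset.sum_comm]
      refine Finset.sum_congr rfl fun q _ => ?_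
      rw [hg q i, Finset.sum_mul, Finset.mul_sum]
      exact Finset.sum_congr rfl fun d _ => by ring
    rw [h2, Finset.sum_mul, ← sub_eq_zero, ← Finset.sum_add_distrib,
      ← Finset.sum_sub_distrib] at h1
    rw [← h1]
    exact Finset.sum_congr rfl fun d _ => by ring
  have hDne : D.Nonempty := Finset.card_pos.1 (by omega)
  rcases hDS with hDS | hSD
  · obtain ⟨r₀, hr₀⟩ := hDne
    have htD : ∀ d ∈ D, t d ≠ 0 := fun d hd => by simpa [S] using hDS hd
    have ht0 := htD r₀ hr₀
    -- Normalise the rank-one matrix so that one coordinate of its column vector is `1`.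
    obtain ⟨p, hp, u', y', hup, huy⟩ : ∃ p ∈ D, ∃ (u' : Fin R → F) (y' : Fin J → F),
        u' p = 1 ∧ ∀ d ∈ D, ∀ j, u d * y j / t r₀ = u' d * y' j := by
      by_cases hz : ∃ p ∈ D, u p ≠ 0
      · obtain ⟨p, hp, hup⟩ := hz
        refine ⟨p, hp, fun d => u d / u p, fun j => u p * y j / t r₀, div_self hup, ?_⟩
        intro d _ j
        field_simp
      · push Not at hz
        refine ⟨r₀, hr₀, 1, 0, rfl, fun d hd j => by simp [hz d hd]⟩
    refine hbad D r₀ p hD hp ⟨(fun r i => A i r, fun q d => g q d, fun q j => B j q,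
      fun r => if r.1 ∈ D then t r₀ / t r else t r / t r₀, fun r => u' r, y', C), ?_⟩
    refine Prod.ext ?_ (Prod.ext ?_ rfl)
    · funext i r
      by_cases hr : r ∈ D
      · simp [badMap, hr]
      · simp only [badMap, hr, dite_false]
        rw [hg r i, Finset.sum_coe_sort D (fun d => g r d * A i d)]
    · funext j r
      by_cases hr : r ∈ D
      · simp only [badMap, hr, dite_true, if_true]
        have e1 : (if r ≠ r₀ then t r₀ / t r else 1) = t r₀ / t r := by
          split_ifs with h0
          · rfl
          · push Not at h0
            rw [h0, div_self ht0]
        have e2 : (if r ≠ p then u' r else 1) = u' r := by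
          split_ifs with h0
          · rfl
          · push Not at h0
            rw [h0, hup]
        have e3 : ∑ q : {r // r ∈ Dᶜ}, (if q.1 ≠ r₀ then
              (if q.1 ∈ D then t r₀ / t q.1 else t q.1 / t r₀) else 1) * g q.1 r * B j q.1
            = (∑ q ∈ Dᶜ, t q * g q r * B j q) / t r₀ := by
          rw [Finset.sum_div, ← Finset.sum_coe_sort Dᶜ (fun q => t q * g q r * B j q / t r₀)]
          refine Finset.sum_congr rfl fun q _ => ?_
          have hq : q.1 ∉ D := Finset.mem_compl.1 q.2
          have hq0 : q.1 ≠ r₀ := fun h => hq (h ▸ hr₀)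
          rw [if_pos hq0, if_neg hq]
          ring
        simp only [dite_eq_ite]
        rw [e1, e2, e3, ← huy r hr j, ← hco j r hr]
        have := htD r hr
        field_simp
        ring
      · simp [badMap, hr]
  · have hout : ∀ q ∈ Dᶜ, t q = 0 := by
      intro q hq
      by_contra hne
      exact Finset.mem_compl.1 hq (hSD (by simpa [S] using hne))
    have hpar : ∀ j, ∀ d ∈ D, t d * B j d = u d * y j := by
      intro j d hd
      rw [← hco j d hd, Finset.sum_eq_zero (fun q hq => by rw [hout q hq, zero_mul, zero_mul]),
        add_zero]
    have hd₁ : r₁ ∈ D := hSD (by simpa [S] using h₁)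
    have hd₂ : r₂ ∈ D := hSD (by simpa [S] using h₂)
    have hind := hB {r₁, r₂} (Finset.card_le_two.trans hJ)
      (fun r => if r = r₁ then u r₂ * t r₁ else -(u r₁ * t r₂)) (fun j => by
        rw [Finset.sum_pair (Ne.symm h₁₂), if_pos rfl, if_neg h₁₂]
        linear_combination u r₂ * hpar j r₁ hd₁ - u r₁ * hpar j r₂ hd₂) r₁ (by simp)
    rw [if_pos rfl] at hind
    have hu2 : u r₂ = 0 := (mul_eq_zero.1 hind).resolve_right h₁
    have hone := hB {r₂} (by simp; omega) 1 (fun j => by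
      have := hpar j r₂ hd₂
      rw [hu2, zero_mul] at this
      simpa using (mul_eq_zero.1 this).resolve_left h₂) r₂ (by simp)
    exact one_ne_zero hone

theorem genericallyUnique (F : Type*) [RCLike F] [MeasureSpace F] [BorelSpace F]
    [(volume : Measure F).IsAddHaarMeasure] {I J K R : ℕ} (hI : 3 ≤ I) (hIJ : I ≤ J)
    (hJR : J ≤ R) (hRK : R ≤ K) (hR : R ≤ (I - 1) * (J - 1)) :
    CPDGenericallyUnique F I J K R := by
  have hA : ∀ᵐ A : Fin I → Fin R → F, ∀ D : Finset (Fin R), D.card ≤ I → ∀ c : Fin R → F,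
      (∀ i, ∑ d ∈ D, c d * A i d = 0) → ∀ d ∈ D, c d = 0 := by
    rw [ae_all_iff]; intro D
    rw [ae_all_iff]; exact ae_columns_independent F D
  have hB : ∀ᵐ B : Fin J → Fin R → F, ∀ D : Finset (Fin R), D.card ≤ J → ∀ c : Fin R → F,
      (∀ j, ∑ d ∈ D, c d * B j d = 0) → ∀ d ∈ D, c d = 0 := by
    rw [ae_all_iff]; intro D
    rw [ae_all_iff]; exact ae_columns_independent F D
  have hC := ae_columns_independent F (m := K) (Finset.univ : Finset (Fin R)) (by simpa using hRK)
  have hbad : ∀ᵐ z : (Fin I → Fin R → F) × (Fin J → Fin R → F) × (Fin K → Fin R → F),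
      ∀ (D : Finset (Fin R)) (r₀ p : Fin R), D.card = I → p ∈ D →
        z ∉ Set.range (badMap F I J K R D r₀ p) := by
    simp only [ae_all_iff]
    intro D r₀ p hD hp
    rw [← measure_eq_zero_iff_ae_notMem]
    exact badMap_null F (by omega) (by omega) hR D hD r₀ p hp
  have := isAddHaar_matrix F I R
  have := isAddHaar_matrix F J R
  have := isAddHaar_matrix F K R
  have hBC : ∀ᵐ z : (Fin J → Fin R → F) × (Fin K → Fin R → F), _ :=
    (Measure.quasiMeasurePreserving_fst.ae hB).and (Measure.quasiMeasurePreserving_snd.ae hC)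
  have hA' : ∀ᵐ z : (Fin I → Fin R → F) × (Fin J → Fin R → F) × (Fin K → Fin R → F), _ :=
    Measure.quasiMeasurePreserving_fst.ae hA
  have hBC' : ∀ᵐ z : (Fin I → Fin R → F) × (Fin J → Fin R → F) × (Fin K → Fin R → F), _ :=
    Measure.quasiMeasurePreserving_snd.ae hBC
  rw [CPDGenericallyUnique, ← ae_iff]
  filter_upwards [hA', hBC', hbad] with z hzA hzBC hzbad
  obtain ⟨hzB, hzC⟩ := hzBC
  refine cpdUnique_of_good ?_ ?_ (fun c hc r => hzC c hc r (Finset.mem_univ r))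
    (rankOne_of_generic (C := z.2.2) (by omega) (by omega) (by omega) hzA hzB hzbad)
  · intro r
    by_contra! h0
    exact one_ne_zero (hzA {r} (by simp; omega) 1 (by simpa using h0) r (by simp))
  · intro r
    by_contra! h0
    exact one_ne_zero (hzB {r} (by simp; omega) 1 (by simpa using h0) r (by simp))

/-- If `3 ≤ I ≤ J ≤ R ≤ K` and `R ≤ (I−1)(J−1)`, then for `F = ℝ` and
`F = ℂ` the CPD of an `I×J×K` tensor of rank `R` is generically unique. -/
theorem statement1 (I J K R : ℕ) (hI : 3 ≤ I) (hIJ : I ≤ J) (hJR : J ≤ R) (hRK : R ≤ K)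
    (hR : R ≤ (I - 1) * (J - 1)) :
    CPDGenericallyUnique ℝ I J K R ∧ CPDGenericallyUnique ℂ I J K R := by
  exact ⟨genericallyUnique ℝ hI hIJ hJR hRK hR, genericallyUnique ℂ hI hIJ hJR hRK hR⟩
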